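/- arXiv:1204.2124 — 8 statements merged into one kernel-verified Lean document; each statement's English description precedes it below -/
import Mathlib

section
/- Let G be a finite simple graph with connected components G_1, …, G_k (k ≥ 1) and let ℓ ≥ 2. There exists a surjective homomorphism from G to the path P_ℓ on ℓ vertices if and only if G is bipartite and diam(G_1) + … + diam(G_k) + k ≥ ℓ. -/
lemma SP_walk_ivt {W : Type*} {H : SimpleGraph W} (g : W → ℕ)
    (hg : ∀ a b, H.Adj a b → g b ≤ g a + 1) {u v : W} (p : H.Walk u v) (j : ℕ)
    (h1 : g u ≤ j) (h2 : j ≤ g v) : ∃ z, g z = j := by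
  induction p with
  | nil => exact ⟨_, le_antisymm h1 h2⟩
  | @cons a b c hab q ih =>
    by_cases h : g b ≤ j
    · exact ih h h2
    · have := hg _ _ hab
      exact ⟨a, by omega⟩

lemma SP_walk_lip {W : Type*} {H : SimpleGraph W} (g : W → ℕ)
    (hg : ∀ a b, H.Adj a b → g b ≤ g a + 1) {u v : W} (p : H.Walk u v) :
    g v ≤ g u + p.length := by
  induction p with
  | nil => simp
  | @cons a b c hab q ih =>
    have := hg _ _ hab
    rw [SimpleGraph.Walk.length_cons]
    omega

lemma SP_offsets {ι : Type*} (s : Finset ι) (d : ι → ℕ) :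
    ∃ a : ι → ℕ, ∀ n < ∑ i ∈ s, (d i + 1), ∃ i ∈ s, a i ≤ n ∧ n ≤ a i + d i := by
  classical
  induction s using Finset.induction_on with
  | empty => exact ⟨fun _ => 0, by simp⟩
  | insert i s hi ih =>
    obtain ⟨a, ha⟩ := ih
    refine ⟨Function.update a i (∑ i ∈ s, (d i + 1)), fun n hn => ?_⟩
    rw [Finset.sum_insert hi] at hn
    by_cases h : n < ∑ i ∈ s, (d i + 1)
    · obtain ⟨k, hk, h1⟩ := ha n h
      have hne : k ≠ i := fun h => hi (h ▸ hk)
      exact ⟨k, Finset.mem_insert_of_mem hk, by simpa [Function.update_of_ne hne] using h1⟩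
    · refine ⟨i, Finset.mem_insert_self _ _, ?_⟩
      simp only [Function.update_self]
      omega

lemma SP_dist_step {W : Type*} {H : SimpleGraph W} (hc : H.Connected) (h2 : H.Colorable 2)
    (x : W) {a b : W} (hab : H.Adj a b) :
    H.dist x a + 1 = H.dist x b ∨ H.dist x b + 1 = H.dist x a := by
  have C : H.Coloring Bool := h2.toColoring (by simp)
  obtain ⟨p, hp⟩ := hc.exists_walk_length_eq_dist x a
  obtain ⟨q, hq⟩ := hc.exists_walk_length_eq_dist x b
  have e1 := C.even_length_iff_congr p
  have e2 := C.even_length_iff_congr q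
  have hne := C.valid hab
  rw [hp] at e1
  rw [hq] at e2
  have t1 := H.dist_le (p.concat hab)
  have t2 := H.dist_le (q.concat hab.symm)
  rw [SimpleGraph.Walk.length_concat] at t1 t2
  have : H.dist x a ≠ H.dist x b := by
    intro h
    rw [h, e2] at e1
    revert e1 hne
    cases C a <;> cases C b <;> cases C x <;> simp
  omega

/-- the retraction of the infinite path onto the path on `l` vertices -/
def SP_retr (l n : ℕ) : ℕ := if n < l then n else l - 1 - (n - (l - 1)) % 2

lemma SP_retr_lt {l : ℕ} (hl : 2 ≤ l) (n : ℕ) : SP_retr l n < l := by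
  unfold SP_retr; split_ifs <;> omega

lemma SP_retr_step {l : ℕ} (hl : 2 ≤ l) (n : ℕ) :
    SP_retr l n + 1 = SP_retr l (n + 1) ∨ SP_retr l (n + 1) + 1 = SP_retr l n := by
  unfold SP_retr; split_ifs <;> omega



/-- Let `G` be a finite simple graph with connected components
`G₁, …, G_k` (`k ≥ 1`) and let `ℓ ≥ 2`. There exists a surjective homomorphism from `G`
to the path `P_ℓ` on `ℓ` vertices if and only if `G` is bipartite and
`diam G₁ + … + diam G_k + k ≥ ℓ`. -/
theorem surjective_hom_to_path_iff {V : Type*} [Fintype V] (G : SimpleGraph V)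
    [Fintype G.ConnectedComponent] (hk : 1 ≤ Fintype.card G.ConnectedComponent)
    (ℓ : ℕ) (hℓ : 2 ≤ ℓ) :
    (∃ f : G →g SimpleGraph.pathGraph ℓ, Function.Surjective f) ↔
      G.Colorable 2 ∧
        ℓ ≤ (∑ c : G.ConnectedComponent, (G.induce c.supp).diam) +
              Fintype.card G.ConnectedComponent := by
  classical
  have hconn : ∀ c : G.ConnectedComponent, (G.induce c.supp).Connected :=
    fun c => c.connected_toSimpleGraph
  constructor
  · rintro ⟨f, hf⟩
    have hstep : ∀ a b, G.Adj a b → (f a).val + 1 = (f b).val ∨ (f b).val + 1 = (f a).val :=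
      fun a b hab => SimpleGraph.pathGraph_adj.1 (f.map_rel hab)
    constructor
    · refine ⟨SimpleGraph.Coloring.mk (fun v => ⟨(f v).val % 2, by omega⟩) ?_⟩
      intro a b hab h
      have := hstep a b hab
      rw [Fin.mk.injEq] at h
      omega
    · have hcard : ∀ c : G.ConnectedComponent,
          ((Finset.univ.filter (fun v => v ∈ c.supp)).image f).card
            ≤ (G.induce c.supp).diam + 1 := by
        intro c
        haveI : Nonempty c.supp := (hconn c).nonempty
        have htop := SimpleGraph.connected_iff_ediam_ne_top.1 (hconn c)
        obtain ⟨u, hu⟩ := Finite.exists_min (fun v : c.supp => (f v.1).val)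
        have hsub : (((Finset.univ.filter (fun v => v ∈ c.supp)).image f).image Fin.val) ⊆
            Finset.Icc (f u.1).val ((f u.1).val + (G.induce c.supp).diam) := by
          intro n hn
          simp only [Finset.mem_image, Finset.mem_filter, Finset.mem_univ, true_and] at hn
          obtain ⟨_, ⟨v, hv, rfl⟩, rfl⟩ := hn
          obtain ⟨p, hp⟩ := (hconn c).exists_walk_length_eq_dist u ⟨v, hv⟩
          have h1 := SP_walk_lip (fun w : c.supp => (f w.1).val)
            (fun a b hab => by have := hstep a.1 b.1 hab; omega) p
          have h2 := SimpleGraph.dist_le_diam htop (u := u) (v := ⟨v, hv⟩)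
          have h3 := hu ⟨v, hv⟩
          rw [Finset.mem_Icc]
          simp only at h1 h3
          omega
        have := Finset.card_le_card hsub
        rw [Finset.card_image_of_injective _ Fin.val_injective, Nat.card_Icc] at this
        omega
      have huniv : (Finset.univ : Finset (Fin ℓ)) ⊆ Finset.univ.biUnion
          (fun c : G.ConnectedComponent => (Finset.univ.filter (fun v => v ∈ c.supp)).image f) := by
        intro y _
        obtain ⟨v, rfl⟩ := hf y
        simp only [Finset.mem_biUnion, Finset.mem_image, Finset.mem_filter, Finset.mem_univ,
          true_and]
        exact ⟨G.connectedComponentMk v, v, rfl, rfl⟩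
      calc ℓ = (Finset.univ : Finset (Fin ℓ)).card := by simp
        _ ≤ _ := Finset.card_le_card huniv
        _ ≤ _ := Finset.card_biUnion_le
        _ ≤ ∑ c : G.ConnectedComponent, ((G.induce c.supp).diam + 1) :=
            Finset.sum_le_sum fun c _ => hcard c
        _ = _ := by simp [Finset.sum_add_distrib]
  · rintro ⟨hcol, hle⟩
    have hends : ∀ c : G.ConnectedComponent, ∃ u v : c.supp,
        (G.induce c.supp).dist u v = (G.induce c.supp).diam := fun c => by
      haveI : Nonempty c.supp := (hconn c).nonempty
      exact SimpleGraph.exists_dist_eq_diam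
    choose u v huv using hends
    have hcolc : ∀ c : G.ConnectedComponent, (G.induce c.supp).Colorable 2 :=
      fun c => hcol.of_hom (SimpleGraph.Embedding.induce c.supp).toHom
    obtain ⟨a, ha⟩ := SP_offsets Finset.univ
      (fun c : G.ConnectedComponent => (G.induce c.supp).diam)
    let F : V → ℕ := fun w => a (G.connectedComponentMk w) +
      (G.induce (G.connectedComponentMk w).supp).dist (u _) ⟨w, rfl⟩
    have hF : ∀ (c : G.ConnectedComponent) (w : V) (hw : w ∈ c.supp),
        F w = a c + (G.induce c.supp).dist (u c) ⟨w, hw⟩ := by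
      intro c w hw
      have : G.connectedComponentMk w = c := hw
      subst this
      rfl
    have hFstep : ∀ x y, G.Adj x y → F x + 1 = F y ∨ F y + 1 = F x := by
      intro x y hxy
      have hy : y ∈ (G.connectedComponentMk x).supp :=
        SimpleGraph.ConnectedComponent.sound hxy.symm.reachable
      rw [hF _ x rfl, hF _ y hy]
      have := SP_dist_step (hconn (G.connectedComponentMk x)) (hcolc _)
        (u (G.connectedComponentMk x)) (a := ⟨x, rfl⟩) (b := ⟨y, hy⟩) hxy
      omega
    refine ⟨⟨fun w => ⟨SP_retr ℓ (F w), SP_retr_lt hℓ _⟩, ?_⟩, ?_⟩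
    · intro x y hxy
      rw [SimpleGraph.pathGraph_adj]
      rcases hFstep x y hxy with h | h
      · have := SP_retr_step hℓ (F x)
        rw [h] at this
        exact this
      · have := SP_retr_step hℓ (F y)
        rw [h] at this
        exact this.symm
    · intro y
      obtain ⟨c, -, h1, h2⟩ := ha y.val (by
        have := y.isLt
        rw [Finset.sum_add_distrib]
        simp only [Finset.sum_const, Finset.card_univ, smul_eq_mul, mul_one]
        omega)
      obtain ⟨p, -⟩ := (hconn c).exists_walk_length_eq_dist (u c) (v c)
      obtain ⟨z, hz⟩ := SP_walk_ivt (fun w => (G.induce c.supp).dist (u c) w)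
        (fun a b hab => by have := SP_dist_step (hconn c) (hcolc c) (u c) hab; omega) p (y.val - a c)
        (by simp) (by rw [huv]; omega)
      refine ⟨z.1, Fin.ext ?_⟩
      change SP_retr ℓ (F z.1) = y.val
      have e : F z.1 = y.val := by
        rw [hF c z.1 z.2]
        change a c + (G.induce c.supp).dist (u c) z = _
        omega
      rw [e, SP_retr, if_pos y.isLt]
end

section
/- Let F be a finite connected bipartite graph and let s ≥ 2 be an integer with s ≤ diam(F) + 1. Then there exists a surjective homomorphism from F to the path P_s on s vertices. -/
/-- Let `F` be a finite connected bipartite graph and let `s ≥ 2` be an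
integer with `s ≤ diam F + 1`. Then there exists a surjective homomorphism from `F` to the
path `P_s` on `s` vertices. -/
theorem surjective_hom_connected_bipartite_to_path {V : Type*} [Fintype V]
    (F : SimpleGraph V) (hF : F.Connected) (hbip : F.Colorable 2)
    (s : ℕ) (hs2 : 2 ≤ s) (hs : s ≤ F.diam + 1) :
    ∃ f : F →g SimpleGraph.pathGraph s, Function.Surjective f := by
  haveI := hF.nonempty
  obtain ⟨a, b, hab⟩ := F.exists_dist_eq_diam
  have c : F.Coloring Bool := (hbip.toColoring (by simp))
  have hpar : ∀ x, (Even (F.dist a x) ↔ (c a ↔ c x)) := by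
    intro x
    obtain ⟨p, hp⟩ := hF.exists_walk_length_eq_dist a x
    rw [← hp]
    exact c.even_length_iff_congr p
  have hadj : ∀ {x y}, F.Adj x y → F.dist a x + 1 = F.dist a y ∨ F.dist a y + 1 = F.dist a x := by
    intro x y h
    have h1 := hF.dist_triangle (u := a) (v := x) (w := y)
    have h2 := hF.dist_triangle (u := a) (v := y) (w := x)
    have h3 := SimpleGraph.dist_eq_one_iff_adj.2 h
    have h4 := SimpleGraph.dist_eq_one_iff_adj.2 h.symm
    have h5 : F.dist a x ≠ F.dist a y := by
      intro he
      have hx := hpar x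
      rw [he, hpar y] at hx
      have := c.valid h
      revert hx this
      cases c a <;> cases c x <;> cases c y <;> simp
    omega
  refine ⟨⟨fun x => ⟨if F.dist a x < s then F.dist a x else
    if (F.dist a x + (s - 1)) % 2 = 0 then s - 1 else s - 2, by split_ifs <;> omega⟩, ?_⟩, ?_⟩
  · intro x y h
    rw [SimpleGraph.pathGraph_adj]
    have := hadj h
    dsimp only
    split_ifs <;> omega
  · intro i
    obtain ⟨p, hp⟩ := hF.exists_walk_length_eq_dist a b
    have hi := i.2
    have h1 := SimpleGraph.dist_le (p.take i.1)
    have h2 := SimpleGraph.dist_le (p.drop i.1)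
    have h3 := hF.dist_triangle (u := a) (v := p.getVert i.1) (w := b)
    rw [SimpleGraph.Walk.take_length] at h1
    rw [SimpleGraph.Walk.drop_length] at h2
    have h4 : F.dist a (p.getVert i.1) = i.1 := by omega
    refine ⟨p.getVert i.1, Fin.ext ?_⟩
    simp [h4]
end

section
/- Let A = {a_1, …, a_n} be an (m,B)-positive multiset of integers. Set p_i = a_i + B for i = 1, …, n and q = 4B. Let G be the linear forest P_{p_1} + P_{p_2} + … + P_{p_n} (the disjoint union of paths on p_1, …, p_n vertices) and let H be the disjoint union of m copies of the path P_q. Then A has a 3-partition if and only if there exists a surjective homomorphism from G to H. -/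
/-- The disjoint union of an indexed family of graphs, on the sigma type. -/
def disjointUnionGraph {ι : Type*} {F : ι → Type*} (Gs : ∀ i, SimpleGraph (F i)) :
    SimpleGraph (Σ i, F i) :=
  SimpleGraph.fromRel
    (fun x y => ∃ (i : ι) (u v : F i), (Gs i).Adj u v ∧ x = ⟨i, u⟩ ∧ y = ⟨i, v⟩)

/-- `a : Fin n → ℕ` (an `(m,B)`-positive multiset, given via the hypotheses `n = 3m`,
`∑ aᵢ = mB`, `aᵢ > 0`) has a 3-partition: the index set splits into `m` classes, each of
size 3 and with elements summing to `B`. -/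
def HasThreePartition (n m B : ℕ) (a : Fin n → ℕ) : Prop :=
  ∃ part : Fin n → Fin m, ∀ j : Fin m,
    (Finset.univ.filter (fun i => part i = j)).card = 3 ∧
    ∑ i ∈ Finset.univ.filter (fun i => part i = j), a i = B

theorem disjointUnionGraph_adj_iff {ι : Type*} {F : ι → Type*} (Gs : ∀ i, SimpleGraph (F i))
    (x y : Σ i, F i) : (disjointUnionGraph Gs).Adj x y ↔
      ∃ (i : ι) (u v : F i), (Gs i).Adj u v ∧ x = ⟨i, u⟩ ∧ y = ⟨i, v⟩ := by
  unfold disjointUnionGraph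
  rw [SimpleGraph.fromRel_adj]
  constructor
  · rintro ⟨_, h | ⟨i, u, v, h, rfl, rfl⟩⟩
    · exact h
    · exact ⟨i, v, u, h.symm, rfl, rfl⟩
  · rintro ⟨i, u, v, h, rfl, rfl⟩
    refine ⟨?_, Or.inl ⟨i, u, v, h, rfl, rfl⟩⟩
    intro e
    have : u = v := by simpa using e
    exact h.ne this

theorem card_total (n m B : ℕ) (a : Fin n → ℕ) (hn : n = 3 * m) (hsum : ∑ i, a i = m * B) :
    Fintype.card (Σ i : Fin n, Fin (a i + B)) = Fintype.card (Σ _ : Fin m, Fin (4 * B)) := by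
  simp [Fintype.card_sigma, Finset.sum_add_distrib, hsum]
  subst hn
  ring

theorem forward_dir (n m B : ℕ) (a : Fin n → ℕ) (hn : n = 3 * m) (hsum : ∑ i, a i = m * B)
    (h : HasThreePartition n m B a) :
      ∃ f : disjointUnionGraph (fun i : Fin n => SimpleGraph.pathGraph (a i + B)) →g
            disjointUnionGraph (fun _ : Fin m => SimpleGraph.pathGraph (4 * B)),
        Function.Surjective f := by
  obtain ⟨part, hp⟩ := h
  let off : Fin n → ℕ := fun i =>
    ∑ k ∈ Finset.univ.filter (fun k => k < i ∧ part k = part i), (a k + B)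
  have hadd : ∀ i, off i + (a i + B) =
      ∑ k ∈ insert i (Finset.univ.filter (fun k => k < i ∧ part k = part i)), (a k + B) := by
    intro i
    rw [Finset.sum_insert (by simp)]
    simp only [off]
    ring
  have hbound : ∀ i, off i + (a i + B) ≤ 4 * B := by
    intro i
    have h1 := hp (part i)
    have h2 : ∑ k ∈ Finset.univ.filter (fun k => part k = part i), (a k + B) = 4 * B := by
      rw [Finset.sum_add_distrib, h1.2, Finset.sum_const, h1.1, smul_eq_mul]
      ring
    rw [← h2, hadd]
    apply Finset.sum_le_sum_of_subset
    intro k hk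
    simp only [Finset.mem_insert, Finset.mem_filter, Finset.mem_univ, true_and] at hk ⊢
    rcases hk with rfl | hk
    · rfl
    · exact hk.2
  have hlt : ∀ i i', i < i' → part i = part i' → off i + (a i + B) ≤ off i' := by
    intro i i' hi he
    rw [hadd]
    apply Finset.sum_le_sum_of_subset
    intro k hk
    simp only [Finset.mem_insert, Finset.mem_filter, Finset.mem_univ, true_and] at hk ⊢
    rcases hk with rfl | hk
    · exact ⟨hi, he⟩
    · exact ⟨hk.1.trans hi, hk.2.trans he⟩
  let g : (Σ i : Fin n, Fin (a i + B)) → (Σ _ : Fin m, Fin (4 * B)) := fun x =>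
    ⟨part x.1, ⟨off x.1 + x.2.val, by have := hbound x.1; have := x.2.isLt; omega⟩⟩
  have hinj : Function.Injective g := by
    rintro ⟨i, u⟩ ⟨i', u'⟩ h
    simp only [g, Sigma.mk.injEq, heq_eq_eq, Fin.mk.injEq] at h
    obtain ⟨h1, h2⟩ := h
    rcases lt_trichotomy i i' with hi | rfl | hi
    · have := hlt _ _ hi h1
      have := u.isLt
      omega
    · have : u = u' := Fin.ext (by omega)
      rw [this]
    · have := hlt _ _ hi h1.symm
      have := u'.isLt
      omega
  have hbij := (Fintype.bijective_iff_injective_and_card g).2 ⟨hinj, card_total n m B a hn hsum⟩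
  refine ⟨⟨g, ?_⟩, hbij.2⟩
  intro x y hxy
  rw [disjointUnionGraph_adj_iff] at hxy ⊢
  obtain ⟨i, u, v, huv, rfl, rfl⟩ := hxy
  refine ⟨part i, (g ⟨i, u⟩).2, (g ⟨i, v⟩).2, ?_, rfl, rfl⟩
  rw [SimpleGraph.pathGraph_adj] at huv ⊢
  simp only [g]
  omega

theorem backward_dir (n m B : ℕ) (a : Fin n → ℕ) (hn : n = 3 * m) (hsum : ∑ i, a i = m * B)
    (hpos : ∀ i, 0 < a i)
    (f : disjointUnionGraph (fun i : Fin n => SimpleGraph.pathGraph (a i + B)) →g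
            disjointUnionGraph (fun _ : Fin m => SimpleGraph.pathGraph (4 * B)))
    (hf : Function.Surjective f) : HasThreePartition n m B a := by
  have hbij : Function.Bijective f :=
    (Fintype.bijective_iff_surjective_and_card f).2 ⟨hf, card_total n m B a hn hsum⟩
  let part : Fin n → Fin m := fun i => (f ⟨i, ⟨0, by have := hpos i; omega⟩⟩).1
  have hpart : ∀ (i : Fin n) (k : ℕ) (hk : k < a i + B), (f ⟨i, ⟨k, hk⟩⟩).1 = part i := by
    intro i k
    induction k with
    | zero => intro hk; rfl
    | succ k ih =>
      intro hk
      have h1 := ih (by omega)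
      rw [← h1]
      have hadj : (disjointUnionGraph (fun i : Fin n => SimpleGraph.pathGraph (a i + B))).Adj
          ⟨i, ⟨k, by omega⟩⟩ ⟨i, ⟨k + 1, hk⟩⟩ := by
        rw [disjointUnionGraph_adj_iff]
        refine ⟨i, _, _, ?_, rfl, rfl⟩
        rw [SimpleGraph.pathGraph_adj]
        exact Or.inl rfl
      have h2 := f.map_adj hadj
      rw [disjointUnionGraph_adj_iff] at h2
      obtain ⟨j, u, v, _, e1, e2⟩ := h2
      rw [e1, e2]
  have hfib : ∀ j, ∑ i ∈ Finset.univ.filter (fun i => part i = j), (a i + B) = 4 * B := by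
    intro j
    have h1 : ((Finset.univ.filter (fun i => part i = j)).sigma
        (fun i => (Finset.univ : Finset (Fin (a i + B))))).card =
        (({j} : Finset (Fin m)).sigma (fun _ => (Finset.univ : Finset (Fin (4 * B))))).card := by
      apply Finset.card_equiv (Equiv.ofBijective f hbij)
      rintro ⟨i, k, hk⟩
      simp [hpart i k hk]
    simpa [Finset.card_sigma] using h1
  have hfib' : ∀ j, ∑ i ∈ Finset.univ.filter (fun i => part i = j), a i +
      (Finset.univ.filter (fun i => part i = j)).card * B = 4 * B := by
    intro j
    have := hfib j
    rwa [Finset.sum_add_distrib, Finset.sum_const, smul_eq_mul] at this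
  have hle : ∀ j ∈ (Finset.univ : Finset (Fin m)),
      (Finset.univ.filter (fun i => part i = j)).card ≤ 3 := by
    intro j _
    by_contra hc
    push Not at hc
    have hne : (Finset.univ.filter (fun i => part i = j)).Nonempty :=
      Finset.card_pos.1 (by omega)
    have hs : 0 < ∑ i ∈ Finset.univ.filter (fun i => part i = j), a i :=
      Finset.sum_pos (fun i _ => hpos i) hne
    have h4 := Nat.mul_le_mul_right B (Nat.succ_le_of_lt hc)
    have := hfib' j
    simp only [Nat.succ_eq_add_one] at h4
    omega
  have htot : ∑ j : Fin m, (Finset.univ.filter (fun i => part i = j)).card = ∑ _j : Fin m, 3 := by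
    rw [← Finset.card_eq_sum_card_fiberwise (fun i _ => Finset.mem_coe.2 (Finset.mem_univ _))]
    simp [hn, mul_comm]
  have heq := (Finset.sum_eq_sum_iff_of_le hle).1 htot
  refine ⟨part, fun j => ?_⟩
  have h3 := heq j (Finset.mem_univ j)
  refine ⟨h3, ?_⟩
  have := hfib' j
  rw [h3] at this
  omega

/-- Let `A = {a₁, …, a_n}` be an `(m,B)`-positive multiset. Set
`pᵢ = aᵢ + B` and `q = 4B`. Let `G` be the linear forest `P_{p₁} + … + P_{p_n}` and `H`
the disjoint union of `m` copies of `P_q`. Then `A` has a 3-partition if and only if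
there exists a surjective homomorphism from `G` to `H`. -/
theorem threePartition_iff_surjective_hom_linear_forests
    (n m B : ℕ) (a : Fin n → ℕ) (hn : n = 3 * m) (hsum : ∑ i, a i = m * B)
    (hpos : ∀ i, 0 < a i) :
    HasThreePartition n m B a ↔
      ∃ f : disjointUnionGraph (fun i : Fin n => SimpleGraph.pathGraph (a i + B)) →g
            disjointUnionGraph (fun _ : Fin m => SimpleGraph.pathGraph (4 * B)),
        Function.Surjective f := by
  exact ⟨forward_dir n m B a hn hsum, fun ⟨f, hf⟩ => backward_dir n m B a hn hsum hpos f hf⟩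
end

section
/- Let A = {a_1, …, a_n} be an (m,B)-positive multiset of integers. Set p_i = a_i + B for i = 1, …, n and q = 4B. Let G be the disjoint union of complete graphs K_{p_1} + K_{p_2} + … + K_{p_n} and let H be the disjoint union of m copies of the complete graph K_q. Then A has a 3-partition if and only if there exists a surjective homomorphism from G to H. -/
theorem adj_union_top {ι : Type*} {F : ι → Type*} (x y : Σ i, F i) :
    (disjointUnionGraph (fun i => (⊤ : SimpleGraph (F i)))).Adj x y ↔ x ≠ y ∧ x.1 = y.1 := by
  unfold disjointUnionGraph
  rw [SimpleGraph.fromRel_adj]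
  constructor
  · rintro ⟨hne, ⟨i, u, v, -, rfl, rfl⟩ | ⟨i, u, v, -, rfl, rfl⟩⟩
    · exact ⟨hne, rfl⟩
    · exact ⟨hne, rfl⟩
  · rintro ⟨hne, h⟩
    obtain ⟨i, u⟩ := x
    obtain ⟨k, v⟩ := y
    obtain rfl : i = k := h
    refine ⟨hne, Or.inl ⟨i, u, v, ?_, rfl, rfl⟩⟩
    rw [SimpleGraph.top_adj]
    rintro rfl
    exact hne rfl

theorem card_fibre {n m : ℕ} (p : Fin n → ℕ) (part : Fin n → Fin m) (j : Fin m) :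
    Fintype.card {x : Σ i, Fin (p i) // part x.1 = j} =
      ∑ i ∈ Finset.univ.filter (fun i => part i = j), p i := by
  rw [Fintype.card_subtype]
  have : (Finset.univ.filter (fun x : Σ i, Fin (p i) => part x.1 = j)) =
      (Finset.univ.filter (fun i => part i = j)).sigma (fun _ => Finset.univ) := by
    ext x
    simp
  rw [this, Finset.card_sigma]
  simp

/-- Let `A = {a₁, …, a_n}` be an `(m,B)`-positive multiset. Set
`pᵢ = aᵢ + B` and `q = 4B`. Let `G` be the disjoint union of complete graphs
`K_{p₁} + … + K_{p_n}` and `H` the disjoint union of `m` copies of `K_q`. Then `A` has a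
3-partition if and only if there exists a surjective homomorphism from `G` to `H`. -/
theorem threePartition_iff_surjective_hom_unions_of_complete_graphs
    (n m B : ℕ) (a : Fin n → ℕ) (hn : n = 3 * m) (hsum : ∑ i, a i = m * B)
    (hpos : ∀ i, 0 < a i) :
    HasThreePartition n m B a ↔
      ∃ f : disjointUnionGraph (fun i : Fin n => (⊤ : SimpleGraph (Fin (a i + B)))) →g
            disjointUnionGraph (fun _ : Fin m => (⊤ : SimpleGraph (Fin (4 * B)))),
        Function.Surjective f := by
  constructor
  · rintro ⟨part, hp⟩
    have hc : ∀ j, Fintype.card {x : Σ i, Fin (a i + B) // part x.1 = j} =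
        Fintype.card (Fin (4 * B)) := by
      intro j
      rw [card_fibre, Finset.sum_add_distrib, (hp j).2, Finset.sum_const, (hp j).1]
      simp
      ring
    have e : ∀ j, {x : Σ i, Fin (a i + B) // part x.1 = j} ≃ Fin (4 * B) :=
      fun j => Fintype.equivOfCardEq (hc j)
    refine ⟨⟨fun x => ⟨part x.1, e (part x.1) ⟨x, rfl⟩⟩, ?_⟩, ?_⟩
    · intro x y hxy
      rw [adj_union_top] at hxy ⊢
      obtain ⟨hne, h⟩ := hxy
      obtain ⟨i, u⟩ := x
      obtain ⟨k, v⟩ := y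
      obtain rfl : i = k := h
      refine ⟨?_, rfl⟩
      intro heq
      have h2 := eq_of_heq (Sigma.mk.inj heq).2
      have h3 := (e (part i)).injective h2
      exact hne (congrArg Subtype.val h3)
    · rintro ⟨j, z⟩
      obtain ⟨⟨x, rfl⟩, rfl⟩ := (e j).surjective z
      exact ⟨x, rfl⟩
  · rintro ⟨f, hf⟩
    have hcard : Fintype.card (Σ i : Fin n, Fin (a i + B)) =
        Fintype.card (Σ _ : Fin m, Fin (4 * B)) := by
      simp [Finset.sum_add_distrib, hsum, hn]
      ring
    have hbij : Function.Bijective f :=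
      (Fintype.bijective_iff_surjective_and_card (f : (Σ i : Fin n, Fin (a i + B)) → _)).2
        ⟨hf, hcard⟩
    have hfst : ∀ x y : (Σ i : Fin n, Fin (a i + B)), x.1 = y.1 → (f x).1 = (f y).1 := by
      intro x y h
      by_cases hxy : x = y
      · rw [hxy]
      · exact ((adj_union_top _ _).1 (f.map_rel ((adj_union_top x y).2 ⟨hxy, h⟩))).2
    let part : Fin n → Fin m := fun i =>
      (f ⟨i, ⟨0, Nat.add_pos_left (hpos i) B⟩⟩).1
    have hpart : ∀ x : (Σ i : Fin n, Fin (a i + B)), (f x).1 = part x.1 :=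
      fun x => hfst _ _ rfl
    have hfib : ∀ j, ∑ i ∈ Finset.univ.filter (fun i => part i = j), (a i + B) = 4 * B := by
      intro j
      rw [← card_fibre]
      have h1 : Fintype.card {x : Σ i, Fin (a i + B) // part x.1 = j} =
          Fintype.card (Fin (4 * B)) := by
        symm
        refine Fintype.card_of_bijective (f := fun z =>
          ⟨(Equiv.ofBijective f hbij).symm ⟨j, z⟩, ?_⟩) ⟨?_, ?_⟩
        · rw [← hpart]
          exact congrArg Sigma.fst ((Equiv.ofBijective f hbij).apply_symm_apply ⟨j, z⟩)
        · intro z w h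
          have h1 := Subtype.mk.inj h
          have h2 := (Equiv.ofBijective f hbij).symm.injective h1
          exact eq_of_heq (Sigma.mk.inj h2).2
        · rintro ⟨x, hx⟩
          rw [← hpart] at hx
          subst hx
          exact ⟨(f x).2, Subtype.ext ((Equiv.ofBijective f hbij).symm_apply_apply x)⟩
      simpa using h1
    have hle : ∀ j, (Finset.univ.filter (fun i => part i = j)).card ≤ 3 := by
      intro j
      by_contra! hlt
      have h := hfib j
      rw [Finset.sum_add_distrib, Finset.sum_const, smul_eq_mul] at h
      have hS : 0 < ∑ i ∈ Finset.univ.filter (fun i => part i = j), a i :=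
        Finset.sum_pos (fun i _ => hpos i) (Finset.card_pos.1 (by omega))
      have := Nat.mul_le_mul_right B hlt
      omega
    have htot : ∑ j, (Finset.univ.filter (fun i => part i = j)).card = ∑ _j : Fin m, 3 := by
      rw [← Finset.card_eq_sum_card_fiberwise (fun i _ => Finset.mem_coe.2 (Finset.mem_univ _))]
      simp [hn]
      ring
    have heq := (Finset.sum_eq_sum_iff_of_le (fun j _ => hle j)).1 htot
    refine ⟨part, fun j => ⟨heq j (Finset.mem_univ j), ?_⟩⟩
    have h := hfib j
    rw [Finset.sum_add_distrib, Finset.sum_const, smul_eq_mul, heq j (Finset.mem_univ j)] at h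
    omega
end

section
/- Let A = {a_1, …, a_n} be an (m,B)-positive multiset of integers. Set p_i = a_i + B for i = 1, …, n and q = 4B. Let G be the tree with a root vertex w adjacent to vertices v_1, …, v_n, where each v_i is additionally adjacent to p_i leaves u_1^{(i)}, …, u_{p_i}^{(i)}. Let H be the tree with a root vertex z adjacent to vertices y_1, …, y_m, where each y_j is additionally adjacent to q leaves x_1^{(j)}, …, x_q^{(j)}. Then A has a 3-partition if and only if there exists a surjective homomorphism from G to H. -/
/-- The tree with a root `none` adjacent to vertices `some ⟨i, none⟩` for `i : ι`, where
each vertex `some ⟨i, none⟩` is additionally adjacent to the `c i` leaves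
`some ⟨i, some h⟩` (`h : Fin (c i)`). -/
def spiderTree {ι : Type*} (c : ι → ℕ) :
    SimpleGraph (Option ((i : ι) × Option (Fin (c i)))) :=
  SimpleGraph.fromRel
    (fun x y =>
      (x = none ∧ ∃ i : ι, y = some ⟨i, none⟩) ∨
      (∃ (i : ι) (h : Fin (c i)), x = some ⟨i, none⟩ ∧ y = some ⟨i, some h⟩))

theorem spider_adj_root {ι : Type*} (c : ι → ℕ) (y) :
    (spiderTree c).Adj none y ↔ ∃ i, y = some ⟨i, none⟩ := by
  unfold spiderTree
  rw [SimpleGraph.fromRel_adj]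
  constructor
  · rintro ⟨h, (⟨-, i, rfl⟩ | ⟨i, k, h1, h2⟩) | (⟨h1, i, h2⟩ | ⟨i, k, h1, h2⟩)⟩
    · exact ⟨i, rfl⟩
    all_goals simp at *
  · rintro ⟨i, rfl⟩
    exact ⟨by simp, Or.inl (Or.inl ⟨rfl, i, rfl⟩)⟩

theorem spider_adj_mid {ι : Type*} (c : ι → ℕ) (i : ι) (y) :
    (spiderTree c).Adj (some ⟨i, none⟩) y ↔ y = none ∨ ∃ h, y = some ⟨i, some h⟩ := by
  unfold spiderTree
  rw [SimpleGraph.fromRel_adj]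
  constructor
  · rintro ⟨h, (⟨h1, -⟩ | ⟨i, k, h1, h2⟩) | (⟨h1, i, h2⟩ | ⟨i, k, h1, h2⟩)⟩
    · simp at h1
    · simp at h1
      obtain ⟨rfl, -⟩ := h1
      exact Or.inr ⟨k, h2⟩
    · exact Or.inl h1
    · simp at h2
      obtain ⟨rfl, h2⟩ := h2
      simp at h2
  · rintro (rfl | ⟨k, rfl⟩)
    · exact ⟨by simp, Or.inr (Or.inl ⟨rfl, i, rfl⟩)⟩
    · exact ⟨by simp, Or.inl (Or.inr ⟨i, k, rfl, rfl⟩)⟩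

theorem spider_adj_leaf {ι : Type*} (c : ι → ℕ) (i : ι) (k : Fin (c i)) (y) :
    (spiderTree c).Adj (some ⟨i, some k⟩) y ↔ y = some ⟨i, none⟩ := by
  rcases y with _ | ⟨j, _ | l⟩
  · rw [SimpleGraph.adj_comm, spider_adj_root]; simp
  · rw [SimpleGraph.adj_comm, spider_adj_mid]
    constructor
    · rintro (h | ⟨l, h⟩)
      · simp at h
      · simp at h
        obtain ⟨rfl, h⟩ := h
        rfl
    · intro h
      simp at h
      obtain ⟨rfl, -⟩ := h
      exact Or.inr ⟨k, rfl⟩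
  · constructor
    · unfold spiderTree
      rw [SimpleGraph.fromRel_adj]
      rintro ⟨h, (⟨h1, -⟩ | ⟨i, k, h1, h2⟩) | (⟨h1, i, h2⟩ | ⟨i, k, h1, h2⟩)⟩
      · simp at h1
      · simp at h1
        obtain ⟨rfl, h1⟩ := h1
        simp at h1
      · simp at h1
      · simp at h1
        obtain ⟨rfl, h1⟩ := h1
        simp at h1
    · intro h
      simp at h
      obtain ⟨rfl, h⟩ := h
      simp at h

theorem spider_forward (n m B : ℕ) (a : Fin n → ℕ) (part : Fin n → Fin m)
    (hp : ∀ j : Fin m,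
    (Finset.univ.filter (fun i => part i = j)).card = 3 ∧
    ∑ i ∈ Finset.univ.filter (fun i => part i = j), a i = B) :
      ∃ f : spiderTree (fun i : Fin n => a i + B) →g
            spiderTree (fun _ : Fin m => 4 * B),
        Function.Surjective f := by
  have hcard : ∀ j, Fintype.card ((i : {i // part i = j}) × Fin (a i + B)) =
      Fintype.card (Fin (4 * B)) := by
    intro j
    obtain ⟨h1, h2⟩ := hp j
    rw [Fintype.card_sigma]
    simp only [Fintype.card_fin]
    rw [← Finset.sum_subtype (Finset.univ.filter (fun i => part i = j)) (by simp)
      (fun i => a i + B), Finset.sum_add_distrib, h2, Finset.sum_const, h1]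
    simp; ring
  have e := fun j => Fintype.equivOfCardEq (hcard j)
  let f : Option ((i : Fin n) × Option (Fin (a i + B))) →
      Option ((_ : Fin m) × Option (Fin (4 * B))) := fun x => match x with
    | none => none
    | some ⟨i, none⟩ => some ⟨part i, none⟩
    | some ⟨i, some k⟩ => some ⟨part i, some (e (part i) ⟨⟨i, rfl⟩, k⟩)⟩
  refine ⟨⟨f, ?_⟩, ?_⟩
  · intro x y hxy
    rcases x with _ | ⟨i, _ | k⟩
    · obtain ⟨i, rfl⟩ := (spider_adj_root _ _).1 hxy
      exact (spider_adj_root _ _).2 ⟨part i, rfl⟩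
    · rcases (spider_adj_mid _ _ _).1 hxy with rfl | ⟨k, rfl⟩
      · exact (spider_adj_mid _ _ _).2 (Or.inl rfl)
      · exact (spider_adj_mid _ _ _).2 (Or.inr ⟨_, rfl⟩)
    · obtain rfl := (spider_adj_leaf (fun i : Fin n => a i + B) i k y).1 hxy
      exact (spider_adj_leaf (fun _ : Fin m => 4 * B) _ _ _).2 rfl
  · change Function.Surjective f
    rintro (_ | ⟨j, _ | k⟩)
    · exact ⟨none, rfl⟩
    · have : (Finset.univ.filter (fun i => part i = j)).Nonempty := by
        rw [← Finset.card_pos, (hp j).1]; norm_num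
      obtain ⟨i, hi⟩ := this
      simp at hi
      subst hi
      exact ⟨some ⟨i, none⟩, rfl⟩
    · obtain ⟨⟨⟨i, hi⟩, l⟩, rfl⟩ := (e j).surjective k
      subst hi
      exact ⟨some ⟨i, some l⟩, rfl⟩

theorem spider_backward (n m B : ℕ) (a : Fin n → ℕ) (hn : n = 3 * m)
    (hsum : ∑ i, a i = m * B) (hpos : ∀ i, 0 < a i) (hm : 2 ≤ m)
    (f : spiderTree (fun i : Fin n => a i + B) →g spiderTree (fun _ : Fin m => 4 * B))
    (hf : Function.Surjective f) : HasThreePartition n m B a := by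
  have hB : 0 < B := by
    have h1 : 0 < ∑ i, a i :=
      Finset.sum_pos (fun i _ => hpos i) ⟨⟨0, by omega⟩, Finset.mem_univ _⟩
    rw [hsum] at h1
    exact Nat.pos_of_mul_pos_left h1
  have hv : ∀ i, (spiderTree (fun _ : Fin m => 4 * B)).Adj (f none) (f (some ⟨i, none⟩)) :=
    fun i => f.map_adj ((spider_adj_root _ _).2 ⟨i, rfl⟩)
  have hu : ∀ i k, (spiderTree (fun _ : Fin m => 4 * B)).Adj (f (some ⟨i, none⟩))
      (f (some ⟨i, some k⟩)) :=
    fun i k => f.map_adj ((spider_adj_mid _ _ _).2 (Or.inr ⟨k, rfl⟩))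
  have hroot : f none = none := by
    by_contra hne
    obtain ⟨⟨j, s⟩, hj⟩ := Option.ne_none_iff_exists'.1 hne
    have : Nontrivial (Fin m) := Fin.nontrivial_iff_two_le.2 hm
    obtain ⟨j', hj'⟩ := exists_ne j
    obtain ⟨x, hx⟩ := hf (some ⟨j', some ⟨0, by omega⟩⟩)
    rcases x with _ | ⟨i, _ | k⟩
    · rw [hj] at hx
      simp at hx
      exact hj' hx.1.symm
    · have h := hv i
      rw [hj, hx, SimpleGraph.adj_comm, spider_adj_leaf] at h
      simp at h
      exact hj' h.1.symm
    · have h := hu i k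
      have h0 := hv i
      rw [hx, SimpleGraph.adj_comm, spider_adj_leaf] at h
      rw [hj, h, SimpleGraph.adj_comm, spider_adj_mid] at h0
      rcases h0 with h0 | ⟨l, h0⟩
      · simp at h0
      · simp at h0
        exact hj' h0.1.symm
  have hv2 : ∀ i, ∃ j, f (some ⟨i, none⟩) = some ⟨j, none⟩ := by
    intro i
    have h := hv i
    rw [hroot] at h
    exact (spider_adj_root _ _).1 h
  choose part hpart using hv2
  have hle : ∀ j ∈ Finset.univ, 4 * B ≤
      ∑ i ∈ Finset.univ.filter (fun i => part i = j), (a i + B) := by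
    intro j _
    have hsub : (Finset.univ.image (fun h : Fin (4 * B) =>
          (some ⟨j, some h⟩ : Option ((_ : Fin m) × Option (Fin (4 * B)))))) ⊆
        ((Finset.univ.filter (fun i => part i = j)).sigma
          (fun i => (Finset.univ : Finset (Fin (a i + B))))).image
          (fun x => f (some ⟨x.1, some x.2⟩)) := by
      intro y hy
      simp only [Finset.mem_image, Finset.mem_univ, true_and] at hy
      obtain ⟨l, rfl⟩ := hy
      obtain ⟨x, hx⟩ := hf (some ⟨j, some l⟩)
      rcases x with _ | ⟨i, _ | k⟩
      · rw [hroot] at hx; simp at hx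
      · rw [hpart] at hx
        simp at hx
      · rw [Finset.mem_image]
        refine ⟨⟨i, k⟩, ?_, hx⟩
        have h := hu i k
        rw [hx, hpart, SimpleGraph.adj_comm, spider_adj_leaf] at h
        simp at h
        simp [h]
    have h1 := (Finset.card_le_card hsub).trans Finset.card_image_le
    rw [Finset.card_image_of_injective _ (by intro x y h; simpa using h),
      Finset.card_sigma] at h1
    simpa using h1
  have htot : ∑ j : Fin m, 4 * B =
      ∑ j : Fin m, ∑ i ∈ Finset.univ.filter (fun i => part i = j), (a i + B) := by
    rw [Finset.sum_fiberwise, Finset.sum_add_distrib, hsum]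
    simp [hn]; ring
  have heq := (Finset.sum_eq_sum_iff_of_le hle).1 htot
  have hk : ∑ j : Fin m, (Finset.univ.filter (fun i => part i = j)).card =
      ∑ j : Fin m, 3 := by
    rw [← Finset.card_eq_sum_card_fiberwise (fun _ _ => Finset.mem_coe.2 (Finset.mem_univ _))]
    simp [hn]; ring
  have heq2 : ∀ j, 4 * B = ∑ i ∈ Finset.univ.filter (fun i => part i = j), a i +
      (Finset.univ.filter (fun i => part i = j)).card * B := by
    intro j
    rw [heq j (Finset.mem_univ _), Finset.sum_add_distrib]
    simp
  have hk3 : ∀ j ∈ Finset.univ, (Finset.univ.filter (fun i => part i = j)).card ≤ 3 := by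
    intro j _
    by_contra hlt
    push Not at hlt
    have h1 : 0 < ∑ i ∈ Finset.univ.filter (fun i => part i = j), a i :=
      Finset.sum_pos (fun i _ => hpos i) (Finset.card_pos.1 (by omega))
    have h2 := heq2 j
    have h3 := Nat.mul_le_mul_right B (Nat.succ_le_of_lt hlt)
    simp only [Nat.succ_eq_add_one] at h3
    omega
  have hk4 := (Finset.sum_eq_sum_iff_of_le hk3).1 hk
  refine ⟨part, fun j => ?_⟩
  have h1 := hk4 j (Finset.mem_univ _)
  have h2 := heq2 j
  rw [h1] at h2
  exact ⟨h1, by omega⟩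

/-- Let `A = {a₁, …, a_n}` be an `(m,B)`-positive multiset. Set
`pᵢ = aᵢ + B` and `q = 4B`. Let `G` be the tree with a root `w` adjacent to `v₁, …, v_n`,
where each `vᵢ` is additionally adjacent to `pᵢ` leaves, and let `H` be the tree with a
root `z` adjacent to `y₁, …, y_m`, where each `y_j` is additionally adjacent to `q`
leaves. Then `A` has a 3-partition if and only if there exists a surjective
homomorphism from `G` to `H`. -/
theorem threePartition_iff_surjective_hom_trees
    (n m B : ℕ) (a : Fin n → ℕ) (hn : n = 3 * m) (hsum : ∑ i, a i = m * B)
    (hpos : ∀ i, 0 < a i) :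
    HasThreePartition n m B a ↔
      ∃ f : spiderTree (fun i : Fin n => a i + B) →g
            spiderTree (fun _ : Fin m => 4 * B),
        Function.Surjective f := by
  constructor
  · rintro ⟨part, hp⟩
    exact spider_forward n m B a part hp
  · rintro ⟨f, hf⟩
    by_cases hm : 2 ≤ m
    · exact spider_backward n m B a hn hsum hpos hm f hf
    · have hm' : m = 0 ∨ m = 1 := by omega
      rcases hm' with rfl | rfl
      · exact ⟨fun i => absurd i.2 (by omega), fun j => j.elim0⟩
      · refine ⟨fun _ => 0, fun j => ?_⟩
        have hj : (0 : Fin 1) = j := Subsingleton.elim _ _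
        simp only [hj, Finset.filter_true, Finset.card_univ, Fintype.card_fin]
        exact ⟨by omega, by simpa using hsum⟩
end

section
/- Let A = {a_1, …, a_n} be an (m,B)-positive multiset of integers. Set p_i = a_i + B for i = 1, …, n and q = 4B. Let G be the split graph whose vertex set consists of a clique of size 4mB partitioned into blocks U_1, …, U_n with |U_i| = p_i, together with independent vertices v_1, …, v_n where each v_i is adjacent exactly to the vertices of U_i. Let H be the split graph whose vertex set consists of a clique of size 4mB partitioned into blocks X^{(1)}, …, X^{(m)} with |X^{(j)}| = q, together with independent vertices y_j^{(1)}, y_j^{(2)}, y_j^{(3)} for j = 1, …, m, where each y_j^{(t)} is adjacent exactly to the vertices of X^{(j)}. Then A has a 3-partition if and only if there exists a surjective homomorphism from G to H. -/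
/-- The split graph whose vertex set is a clique `Σ i, Fin (p i)` (partitioned into
blocks `Uᵢ = {i} × Fin (p i)` of size `p i`) together with independent vertices
`vᵢ` (`i : Fin n`), where `vᵢ` is adjacent exactly to the vertices of `Uᵢ`. -/
def splitGuest (n : ℕ) (p : Fin n → ℕ) :
    SimpleGraph ((Σ i : Fin n, Fin (p i)) ⊕ Fin n) :=
  SimpleGraph.fromRel
    (fun x y =>
      (∃ c d, x = Sum.inl c ∧ y = Sum.inl d) ∨
      (∃ (i : Fin n) (u : Fin (p i)), x = Sum.inr i ∧ y = Sum.inl ⟨i, u⟩))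

/-- The split graph whose vertex set is a clique `Fin m × Fin q` (partitioned into blocks
`X⁽ʲ⁾ = {j} × Fin q` of size `q`) together with independent vertices `y_j⁽¹⁾, y_j⁽²⁾,
y_j⁽³⁾` for each `j : Fin m`, where `y_j⁽ᵗ⁾` is adjacent exactly to the vertices of
`X⁽ʲ⁾`. -/
def splitHost (m q : ℕ) : SimpleGraph ((Fin m × Fin q) ⊕ (Fin m × Fin 3)) :=
  SimpleGraph.fromRel
    (fun x y =>
      (∃ c d, x = Sum.inl c ∧ y = Sum.inl d) ∨
      (∃ (j : Fin m) (t : Fin 3) (u : Fin q), x = Sum.inr (j, t) ∧ y = Sum.inl (j, u)))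

theorem aux_fiber_equiv {α : Type*} [Fintype α] (m k : ℕ) (π : α → Fin m)
    (h : ∀ j, (Finset.univ.filter (fun x => π x = j)).card = k) :
    ∃ e : α ≃ Fin m × Fin k, ∀ x, (e x).1 = π x := by
  have h' : ∀ j, Nonempty ({x // π x = j} ≃ Fin k) := by
    intro j
    refine ⟨Fintype.equivFinOfCardEq ?_⟩
    rw [Fintype.card_subtype]
    exact h j
  let e := fun j => (h' j).some
  refine ⟨((Equiv.sigmaFiberEquiv π).symm.trans (Equiv.sigmaCongrRight e)).trans
    (Equiv.sigmaEquivProd _ _), ?_⟩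
  intro x
  rfl

theorem aux_card_sigma {n m : ℕ} (p : Fin n → ℕ) (part : Fin n → Fin m) (j : Fin m) :
    (Finset.univ.filter (fun x : (Σ i : Fin n, Fin (p i)) => part x.1 = j)).card
      = ∑ i ∈ Finset.univ.filter (fun i => part i = j), p i := by
  have : (Finset.univ.filter (fun x : (Σ i : Fin n, Fin (p i)) => part x.1 = j))
      = (Finset.univ.filter (fun i => part i = j)).sigma (fun _ => Finset.univ) := by
    ext x; simp
  rw [this, Finset.card_sigma]
  simp

theorem guest_cc {n : ℕ} {p : Fin n → ℕ} {c d : Σ i : Fin n, Fin (p i)} (h : c ≠ d) :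
    (splitGuest n p).Adj (Sum.inl c) (Sum.inl d) := by
  simp only [splitGuest, SimpleGraph.fromRel_adj]
  exact ⟨fun e => h (Sum.inl_injective e), Or.inl (Or.inl ⟨c, d, rfl, rfl⟩)⟩

theorem guest_vc {n : ℕ} {p : Fin n → ℕ} (i : Fin n) (u : Fin (p i)) :
    (splitGuest n p).Adj (Sum.inr i) (Sum.inl ⟨i, u⟩) := by
  simp [splitGuest]

theorem host_yc {m q : ℕ} {y : Fin m × Fin 3} {x : Fin m × Fin q}
    (h : (splitHost m q).Adj (Sum.inr y) (Sum.inl x)) : x.1 = y.1 := by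
  obtain ⟨j, t⟩ := y
  obtain ⟨k, u⟩ := x
  simp [splitHost] at h
  simp [h]

theorem host_yy {m q : ℕ} {y z : Fin m × Fin 3}
    (h : (splitHost m q).Adj (Sum.inr y) (Sum.inr z)) : False := by
  simp [splitHost] at h

theorem threePartition_iff_surjective_hom_split_graphs
    (n m B : ℕ) (a : Fin n → ℕ) (hn : n = 3 * m) (hsum : ∑ i, a i = m * B)
    (hpos : ∀ i, 0 < a i) :
    HasThreePartition n m B a ↔
      ∃ f : splitGuest n (fun i => a i + B) →g splitHost m (4 * B),
        Function.Surjective f := by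
  have hcardC : Fintype.card (Σ i : Fin n, Fin (a i + B)) = Fintype.card (Fin m × Fin (4 * B)) := by
    simp [Finset.sum_add_distrib, hsum, hn]; ring
  have hcardV : Fintype.card (Fin n) = Fintype.card (Fin m × Fin 3) := by
    simp [hn]; ring
  constructor
  · rintro ⟨part, hpart⟩
    obtain ⟨e1, he1⟩ := aux_fiber_equiv m (4 * B)
      (fun x : (Σ i : Fin n, Fin (a i + B)) => part x.1) (by
        intro j
        rw [aux_card_sigma (fun i => a i + B) part j, Finset.sum_add_distrib, (hpart j).2,
          Finset.sum_const, (hpart j).1]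
        simp; ring)
    obtain ⟨e2, he2⟩ := aux_fiber_equiv m 3 part (fun j => (hpart j).1)
    refine ⟨⟨Sum.map e1 e2, ?_⟩, ?_⟩
    · have key : ∀ (i : Fin n) (u : Fin (a i + B)), ∃ (j : Fin m) (t : Fin 3) (w : Fin (4 * B)),
          e2 i = (j, t) ∧ e1 ⟨i, u⟩ = (j, w) := fun i u =>
        ⟨part i, (e2 i).2, (e1 ⟨i, u⟩).2, Prod.ext (he2 i) rfl, Prod.ext (he1 ⟨i, u⟩) rfl⟩
      intro x y hxy
      have hinj : Function.Injective (Sum.map e1 e2) :=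
        Function.Injective.sumMap e1.injective e2.injective
      have hne := hinj.ne hxy.ne
      simp only [splitGuest, SimpleGraph.fromRel_adj] at hxy
      simp only [splitHost, SimpleGraph.fromRel_adj]
      refine ⟨hne, ?_⟩
      rcases hxy.2 with (⟨c, d, rfl, rfl⟩ | ⟨i, u, rfl, rfl⟩) | (⟨c, d, rfl, rfl⟩ | ⟨i, u, rfl, rfl⟩)
      · exact Or.inl (Or.inl ⟨_, _, rfl, rfl⟩)
      · obtain ⟨j, t, w, h1, h2⟩ := key i u
        exact Or.inl (Or.inr ⟨j, t, w, by simp [h1], by simp [h2]⟩)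
      · exact Or.inl (Or.inl ⟨_, _, rfl, rfl⟩)
      · obtain ⟨j, t, w, h1, h2⟩ := key i u
        exact Or.inr (Or.inr ⟨j, t, w, by simp [h1], by simp [h2]⟩)
    · exact Function.Surjective.sumMap e1.surjective e2.surjective
  · rintro ⟨f, hf⟩
    rcases Nat.lt_or_ge m 2 with hm | hm
    · have hm' : m = 0 ∨ m = 1 := by omega
      rcases hm' with rfl | rfl
      · subst hn
        exact ⟨fun i => Fin.elim0 i, fun j => Fin.elim0 j⟩
      · refine ⟨fun _ => 0, fun j => ?_⟩
        obtain rfl : (0 : Fin 1) = j := Subsingleton.elim _ _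
        simp [hn, hsum]
    have hB : 0 < B := by
      have hn0 : 0 < n := by omega
      have : 0 < ∑ i, a i :=
        Finset.sum_pos (fun i _ => hpos i) ⟨⟨0, hn0⟩, Finset.mem_univ _⟩
      rw [hsum] at this
      exact Nat.pos_of_mul_pos_left this
    have hbij : Function.Bijective f := by
      rw [Fintype.bijective_iff_surjective_and_card]
      refine ⟨hf, ?_⟩
      rw [Fintype.card_sum, Fintype.card_sum, hcardC, hcardV]
    have hinj := hbij.1
    -- the clique maps to the clique
    have hC : ∀ c, ∃ x, f (Sum.inl c) = Sum.inl x := by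
      intro c
      rcases hc : f (Sum.inl c) with x | y
      · exact ⟨x, rfl⟩
      exfalso
      have h1 : ∀ d : {d // d ≠ c}, ∃ w : Fin (4 * B), f (Sum.inl d.1) = Sum.inl (y.1, w) := by
        rintro ⟨d, hd⟩
        have hadj := f.map_adj (guest_cc hd.symm)
        rw [hc] at hadj
        rcases hd' : f (Sum.inl d) with x | z
        · rw [hd'] at hadj
          exact ⟨x.2, by rw [← host_yc hadj]⟩
        · rw [hd'] at hadj
          exact (host_yy hadj).elim
      choose g hg using h1
      have hgi : Function.Injective g := by
        intro d d' h
        have : f (Sum.inl d.1) = f (Sum.inl d'.1) := by rw [hg, hg, h]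
        exact Subtype.ext (Sum.inl_injective (hinj this))
      have hle := Fintype.card_le_of_injective g hgi
      rw [Fintype.card_subtype_compl, hcardC] at hle
      simp at hle
      have : 2 * (4 * B) ≤ m * (4 * B) := Nat.mul_le_mul_right _ hm
      omega
    choose g hg using hC
    have hgi : Function.Injective g := by
      intro d d' h
      have : f (Sum.inl d) = f (Sum.inl d') := by rw [hg, hg, h]
      exact Sum.inl_injective (hinj this)
    have hgb : Function.Bijective g := by
      rw [Fintype.bijective_iff_injective_and_card]
      exact ⟨hgi, hcardC⟩
    have hV : ∀ i, ∃ y, f (Sum.inr i) = Sum.inr y := by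
      intro i
      rcases hi : f (Sum.inr i) with x | y
      · exfalso
        obtain ⟨c, rfl⟩ := hgb.2 x
        rw [← hg] at hi
        exact absurd (hinj hi) (by simp)
      · exact ⟨y, rfl⟩
    choose h hh using hV
    have hhi : Function.Injective h := by
      intro d d' e
      have : f (Sum.inr d) = f (Sum.inr d') := by rw [hh, hh, e]
      exact Sum.inr_injective (hinj this)
    have hhb : Function.Bijective h := by
      rw [Fintype.bijective_iff_injective_and_card]
      exact ⟨hhi, hcardV⟩
    have hgh : ∀ c, (g c).1 = (h c.1).1 := by
      rintro ⟨i, u⟩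
      have hadj := f.map_adj (guest_vc (p := fun i => a i + B) i u)
      rw [hg, hh] at hadj
      exact host_yc hadj
    have hcard3 : ∀ j : Fin m, (Finset.univ.filter (fun i => (h i).1 = j)).card = 3 := by
      intro j
      have h1 : (Finset.univ.filter (fun i => (h i).1 = j)).card
          = (Finset.univ.filter (fun y : Fin m × Fin 3 => y.1 = j)).card :=
        Finset.card_bijective h hhb (by simp)
      have h2 : (Finset.univ.filter (fun y : Fin m × Fin 3 => y.1 = j))
          = {j} ×ˢ Finset.univ := by ext y; rw [Finset.mem_product]; simp
      rw [h1, h2, Finset.card_product]; simp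
    refine ⟨fun i => (h i).1, fun j => ⟨hcard3 j, ?_⟩⟩
    have h1 : (Finset.univ.filter
          (fun x : (Σ i : Fin n, Fin (a i + B)) => (h x.1).1 = j)).card
        = (Finset.univ.filter (fun y : Fin m × Fin (4 * B) => y.1 = j)).card :=
      Finset.card_bijective g hgb (by simp [hgh])
    have h2 : (Finset.univ.filter (fun y : Fin m × Fin (4 * B) => y.1 = j))
        = {j} ×ˢ Finset.univ := by ext y; rw [Finset.mem_product]; simp
    rw [h2, Finset.card_product, aux_card_sigma (fun i => a i + B) (fun i => (h i).1) j,
      Finset.sum_add_distrib, Finset.sum_const, hcard3 j] at h1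
    simp at h1
    show ∑ i ∈ Finset.univ.filter (fun i => (h i).1 = j), a i = B
    omega
end

section
/- Let A = {a_1, …, a_n} be an (m,B)-positive multiset of integers. Set p_i = 6m²(a_i + B) for i = 1, …, n and q = 24m²B. Let G be the connected graph obtained from disjoint cliques U_1, …, U_n with |U_i| = p_i, where for i = 2, …, n a designated vertex of U_{i−1} is joined to a designated vertex of U_i by a path of length 2m − 1 whose internal vertices are new. Let H be the connected graph obtained from disjoint cliques X^{(1)}, …, X^{(m)}, each of size q, where for j = 2, …, m a designated vertex of X^{(j−1)} is joined by an edge to a designated vertex of X^{(j)}. Then A has a 3-partition if and only if there exists a surjective homomorphism from G to H. -/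
/-- Vertex type for the guest graph of Statement 11: the `n` disjoint cliques
`Uᵢ ≃ Fin (p i)`, together with, for each index `i` with `i + 1 < n`, the `2m - 2`
internal vertices of the connecting path from clique `i` to clique `i + 1`. -/
abbrev IntervalGuestVert (n m : ℕ) (p : Fin n → ℕ) : Type :=
  (Σ i : Fin n, Fin (p i)) ⊕ ({k : Fin n // k.val + 1 < n} × Fin (2 * m - 2))

/-- The `t`-th vertex (`0 ≤ t ≤ 2m - 1`) of the connecting path from clique `i` to
clique `i + 1`: position `0` is the designated exit vertex `e i` of clique `i`, position
`2m - 1` is the designated entry vertex `s (i+1)` of clique `i + 1`, and the positions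
in between are the new internal vertices. -/
def connVert (n m : ℕ) (p : Fin n → ℕ) (e s : ∀ i : Fin n, Fin (p i))
    (i : {k : Fin n // k.val + 1 < n}) (t : ℕ) : IntervalGuestVert n m p :=
  if t = 0 then Sum.inl ⟨i.1, e i.1⟩
  else if t = 2 * m - 1 then Sum.inl ⟨⟨i.1.val + 1, i.2⟩, s ⟨i.1.val + 1, i.2⟩⟩
  else if h : t - 1 < 2 * m - 2 then Sum.inr (i, ⟨t - 1, h⟩)
  else Sum.inl ⟨i.1, e i.1⟩

/-- The connected graph obtained from disjoint cliques `U₁, …, U_n` with `|Uᵢ| = p i`,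
where for each consecutive pair of cliques the designated vertex `e i` of `Uᵢ` is joined
to the designated vertex `s (i+1)` of `Uᵢ₊₁` by a path of length `2m - 1` whose internal
vertices are new. -/
def intervalGuest (n m : ℕ) (p : Fin n → ℕ) (e s : ∀ i : Fin n, Fin (p i)) :
    SimpleGraph (IntervalGuestVert n m p) :=
  SimpleGraph.fromRel
    (fun x y =>
      (∃ (i : Fin n) (u v : Fin (p i)), x = Sum.inl ⟨i, u⟩ ∧ y = Sum.inl ⟨i, v⟩) ∨
      (∃ (i : {k : Fin n // k.val + 1 < n}) (t : ℕ), t + 1 ≤ 2 * m - 1 ∧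
        x = connVert n m p e s i t ∧ y = connVert n m p e s i (t + 1)))

/-- The connected graph obtained from disjoint cliques `X⁽¹⁾, …, X⁽ᵐ⁾`, each of size `q`,
where for each consecutive pair of cliques the designated vertex `eH j` of `X⁽ʲ⁾` is
joined by an edge to the designated vertex `sH (j+1)` of `X⁽ʲ⁺¹⁾`. -/
def intervalHost (m q : ℕ) (eH sH : Fin m → Fin q) : SimpleGraph (Fin m × Fin q) :=
  SimpleGraph.fromRel
    (fun x y =>
      (∃ (j : Fin m) (u v : Fin q), x = (j, u) ∧ y = (j, v)) ∨
      (∃ j j' : Fin m, j'.val = j.val + 1 ∧ x = (j, eH j) ∧ y = (j', sH j')))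

theorem host_adj_iff {m q : ℕ} {eH sH : Fin m → Fin q} {x y : Fin m × Fin q} :
    (intervalHost m q eH sH).Adj x y ↔ x ≠ y ∧
      (x.1 = y.1 ∨ (y.1.val = x.1.val + 1 ∧ x.2 = eH x.1 ∧ y.2 = sH y.1) ∨
        (x.1.val = y.1.val + 1 ∧ y.2 = eH y.1 ∧ x.2 = sH x.1)) := by
  obtain ⟨x1, x2⟩ := x
  obtain ⟨y1, y2⟩ := y
  simp only [intervalHost, SimpleGraph.fromRel_adj]
  refine and_congr_right fun _ => ?_
  constructor
  · rintro ((⟨j, u, v, h1, h2⟩ | ⟨j, j', h, h1, h2⟩) | (⟨j, u, v, h1, h2⟩ | ⟨j, j', h, h1, h2⟩)) <;>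
      simp only [Prod.mk.injEq] at h1 h2 <;> obtain ⟨rfl, rfl⟩ := h1 <;>
      obtain ⟨rfl, rfl⟩ := h2 <;> simp_all
  · rintro (h | ⟨h, h1, h2⟩ | ⟨h, h1, h2⟩)
    · subst h
      exact Or.inl (Or.inl ⟨_, _, _, rfl, rfl⟩)
    · exact Or.inl (Or.inr ⟨x1, y1, h, Prod.ext rfl h1, Prod.ext rfl h2⟩)
    · exact Or.inr (Or.inr ⟨y1, x1, h, Prod.ext rfl h1, Prod.ext rfl h2⟩)

theorem host_triangle {m q : ℕ} {eH sH : Fin m → Fin q} {x y z : Fin m × Fin q}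
    (hxy : (intervalHost m q eH sH).Adj x y) (hxz : (intervalHost m q eH sH).Adj x z)
    (hyz : (intervalHost m q eH sH).Adj y z) : x.1 = y.1 := by
  rw [host_adj_iff] at *
  obtain ⟨x1, x2⟩ := x
  obtain ⟨y1, y2⟩ := y
  obtain ⟨z1, z2⟩ := z
  simp only [ne_eq, Prod.mk.injEq, Fin.ext_iff] at *
  grind

theorem exists_third {q : ℕ} (hq : 3 ≤ q) (x y : Fin q) : ∃ w, w ≠ x ∧ w ≠ y := by
  have : ∃ w : Fin q, w ∉ ({x, y} : Finset (Fin q)) := by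
    by_contra! h
    have h1 : (Finset.univ : Finset (Fin q)) ⊆ {x, y} := fun w _ => h w
    have h2 := Finset.card_le_card h1
    have h3 := Finset.card_le_two (a := x) (b := y)
    simp at h2
    omega
  simpa using this

theorem host_adj_same {m q : ℕ} {eH sH : Fin m → Fin q} (j : Fin m) {u v : Fin q} (h : u ≠ v) :
    (intervalHost m q eH sH).Adj (j, u) (j, v) := by
  rw [host_adj_iff]
  simp [h]

theorem host_walk_same {m q : ℕ} (eH sH : Fin m → Fin q) (hq : 3 ≤ q) (j : Fin m) (L : ℕ) :
    ∀ u v : Fin q, 1 ≤ L → (2 ≤ L ∨ u ≠ v) →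
      ∃ w : (intervalHost m q eH sH).Walk (j, u) (j, v), w.length = L := by
  induction L with
  | zero => intro u v h; omega
  | succ L ih =>
    intro u v _ h2
    by_cases hL : L = 0
    · subst hL
      have huv : u ≠ v := by rcases h2 with h | h; omega; exact h
      exact ⟨(host_adj_same j huv).toWalk, rfl⟩
    · obtain ⟨w, hwu, hwv⟩ := exists_third hq u v
      obtain ⟨W, hW⟩ := ih w v (by omega) (Or.inr hwv)
      exact ⟨SimpleGraph.Walk.cons (host_adj_same j hwu.symm) W, by simp [hW]⟩

theorem host_walk_up {m q : ℕ} (eH sH : Fin m → Fin q) (hq : 3 ≤ q) (d : ℕ) :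
    ∀ (j j' : Fin m) (u v : Fin q) (L : ℕ), j'.val = j.val + d → 2 * d + 1 ≤ L →
      (1 ≤ d ∨ 2 ≤ L ∨ u ≠ v) →
      ∃ w : (intervalHost m q eH sH).Walk (j, u) (j', v), w.length = L := by
  induction d with
  | zero =>
    intro j j' u v L hj hL h
    obtain rfl : j' = j := Fin.ext (by omega)
    exact host_walk_same eH sH hq _ L u v (by omega) (by simpa using h)
  | succ d ih =>
    intro j j' u v L hj hL _
    have hlt := j'.isLt
    let k : Fin m := ⟨j.val + 1, by omega⟩
    have hbr : (intervalHost m q eH sH).Adj (j, eH j) (k, sH k) := by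
      rw [host_adj_iff]
      simp [k, Fin.ext_iff]
    by_cases hu : u = eH j
    · subst hu
      obtain ⟨W, hW⟩ := ih k j' (sH k) v (L - 1) (by simp [k]; omega) (by omega) (by omega)
      exact ⟨SimpleGraph.Walk.cons hbr W, by simp [hW]; omega⟩
    · by_cases hc : 1 ≤ d ∨ 2 ≤ L - 2 ∨ sH k ≠ v
      · obtain ⟨W, hW⟩ := ih k j' (sH k) v (L - 2) (by simp [k]; omega) (by omega) hc
        exact ⟨SimpleGraph.Walk.cons (host_adj_same j hu) (SimpleGraph.Walk.cons hbr W),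
          by simp [hW]; omega⟩
      · push Not at hc
        obtain ⟨h1, h2, h3⟩ := hc
        have hk : j' = k := Fin.ext (by simp [k]; omega)
        rw [hk, ← h3]
        obtain ⟨w, hw1, hw2⟩ := exists_third hq u (eH j)
        exact ⟨SimpleGraph.Walk.cons (host_adj_same j hw1.symm)
          (SimpleGraph.Walk.cons (host_adj_same j hw2) hbr.toWalk), by simp; omega⟩

theorem host_walk {m q : ℕ} (eH sH : Fin m → Fin q) (hq : 3 ≤ q) (x y : Fin m × Fin q)
    (hxy : x ≠ y) : ∃ w : (intervalHost m q eH sH).Walk x y, w.length = 2 * m - 1 := by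
  obtain ⟨j, u⟩ := x
  obtain ⟨j', v⟩ := y
  have h1 := j.isLt
  have h2 := j'.isLt
  have key : j = j' → u ≠ v := by
    rintro rfl rfl
    exact hxy rfl
  rcases le_total j.val j'.val with h | h
  · refine host_walk_up eH sH hq (j'.val - j.val) j j' u v _ (by omega) (by omega) ?_
    by_cases hj : j = j'
    · exact Or.inr (Or.inr (key hj))
    · rw [Fin.ext_iff] at hj
      omega
  · obtain ⟨W, hW⟩ := host_walk_up eH sH hq (j.val - j'.val) j' j v u (2 * m - 1)
      (by omega) (by omega) (by
        by_cases hj : j = j'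
        · exact Or.inr (Or.inr (key hj).symm)
        · rw [Fin.ext_iff] at hj
          omega)
    exact ⟨W.reverse, by simp [hW]⟩

/-- A map on the cliques that is injective and block-respecting extends to the whole guest. -/
theorem exists_hom_of_blocks {n m q : ℕ} (p : Fin n → ℕ) (e s : ∀ i, Fin (p i))
    (eH sH : Fin m → Fin q) (hq : 3 ≤ q) (part : Fin n → Fin m)
    (g : (Σ i : Fin n, Fin (p i)) → Fin m × Fin q) (hg : Function.Injective g)
    (hg1 : ∀ x, (g x).1 = part x.1) :
    ∃ f : intervalGuest n m p e s →g intervalHost m q eH sH, ∀ x, f (Sum.inl x) = g x := by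
  have hw : ∀ i : {k : Fin n // k.val + 1 < n},
      ∃ w : (intervalHost m q eH sH).Walk (g ⟨i.1, e i.1⟩)
        (g ⟨⟨i.1.val + 1, i.2⟩, s ⟨i.1.val + 1, i.2⟩⟩), w.length = 2 * m - 1 := by
    intro i
    refine host_walk eH sH hq _ _ fun h => ?_
    have h2 := congrArg (fun x => x.1.val) (hg h)
    simp at h2
  choose w hw using hw
  let F : IntervalGuestVert n m p → Fin m × Fin q :=
    Sum.elim g (fun x => (w x.1).getVert (x.2.val + 1))
  have hF : ∀ i t, t ≤ 2 * m - 1 → F (connVert n m p e s i t) = (w i).getVert t := by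
    intro i t ht
    unfold connVert
    split_ifs with h0 h1 h2
    · subst h0
      simp [F]
    · subst h1
      rw [← hw i, SimpleGraph.Walk.getVert_length]
      simp [F]
    · simp only [F, Sum.elim_inr]
      congr 1
      omega
    · omega
  have hstep : ∀ i t, t + 1 ≤ 2 * m - 1 → (intervalHost m q eH sH).Adj
      (F (connVert n m p e s i t)) (F (connVert n m p e s i (t + 1))) := by
    intro i t ht
    rw [hF i t (by omega), hF i (t + 1) ht]
    exact (w i).adj_getVert_succ (by rw [hw]; omega)
  have hcl : ∀ (i : Fin n) (u v : Fin (p i)), u ≠ v →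
      (intervalHost m q eH sH).Adj (F (Sum.inl ⟨i, u⟩)) (F (Sum.inl ⟨i, v⟩)) := by
    intro i u v huv
    rw [host_adj_iff]
    refine ⟨fun h => huv ?_, Or.inl ?_⟩
    · have := hg h
      simpa using this
    · simp [F, hg1]
  refine ⟨⟨F, ?_⟩, fun x => rfl⟩
  intro x y hxy
  simp only [intervalGuest, SimpleGraph.fromRel_adj] at hxy
  obtain ⟨hne, (⟨i, u, v, rfl, rfl⟩ | ⟨i, t, ht, rfl, rfl⟩) |
    (⟨i, u, v, rfl, rfl⟩ | ⟨i, t, ht, rfl, rfl⟩)⟩ := hxy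
  · exact hcl i u v fun h => hne (by rw [h])
  · exact hstep i t ht
  · exact (hcl i u v fun h => hne (by rw [h])).symm
  · exact (hstep i t ht).symm

/-- Bijection on the cliques from block sizes. -/
theorem exists_block_bijection {n m q : ℕ} (p : Fin n → ℕ) (part : Fin n → Fin m)
    (h : ∀ j, ∑ i ∈ Finset.univ.filter (fun i => part i = j), p i = q) :
    ∃ g : (Σ i : Fin n, Fin (p i)) → Fin m × Fin q, Function.Bijective g ∧
      ∀ x, (g x).1 = part x.1 := by
  have hcard : ∀ j, Fintype.card {x : Σ i : Fin n, Fin (p i) // part x.1 = j} = q := by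
    intro j
    rw [Fintype.card_subtype, ← h j]
    have : (Finset.univ.filter fun x : (Σ i : Fin n, Fin (p i)) => part x.1 = j) =
        (Finset.univ.filter (fun i => part i = j)).sigma (fun i => Finset.univ) := by
      ext x
      simp
    rw [this, Finset.card_sigma]
    simp
  have E : ∀ j, {x : Σ i : Fin n, Fin (p i) // part x.1 = j} ≃ Fin q := fun j =>
    Fintype.equivFinOfCardEq (hcard j)
  have key : ∀ (j : Fin m) (x : Σ i : Fin n, Fin (p i)) (hx : part x.1 = j),
      (part x.1, E (part x.1) ⟨x, rfl⟩) = (j, E j ⟨x, hx⟩) := by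
    rintro j x rfl
    rfl
  refine ⟨fun x => (part x.1, E (part x.1) ⟨x, rfl⟩), ⟨?_, ?_⟩, fun x => rfl⟩
  · intro x y hxy
    simp only at hxy
    have h1 : part x.1 = part y.1 := congrArg Prod.fst hxy
    rw [key _ x h1] at hxy
    have h2 := (Prod.mk.inj hxy).2
    have h3 := (E (part y.1)).injective h2
    exact congrArg Subtype.val h3
  · rintro ⟨j, v⟩
    refine ⟨((E j).symm v).1, ?_⟩
    simp only
    rw [key j _ ((E j).symm v).2]
    simp

/-- Counting lower bound obtained from a surjective homomorphism. -/
theorem exists_part_of_hom {n m q : ℕ} (p : Fin n → ℕ) (e s : ∀ i, Fin (p i))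
    (eH sH : Fin m → Fin q) (hp : ∀ i, 3 ≤ p i)
    (f : intervalGuest n m p e s →g intervalHost m q eH sH) (hf : Function.Surjective f) :
    ∃ part : Fin n → Fin m, ∀ j, q ≤ ∑ i ∈ Finset.univ.filter (fun i => part i = j), p i +
      (n - 1) * (2 * m - 2) := by
  have hadj : ∀ i (u v : Fin (p i)), u ≠ v →
      (intervalHost m q eH sH).Adj (f (Sum.inl ⟨i, u⟩)) (f (Sum.inl ⟨i, v⟩)) := by
    intro i u v huv
    apply f.map_adj
    simp only [intervalGuest, SimpleGraph.fromRel_adj]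
    exact ⟨by simpa using huv, Or.inl (Or.inl ⟨i, u, v, rfl, rfl⟩)⟩
  have hsame : ∀ i (u v : Fin (p i)), (f (Sum.inl ⟨i, u⟩)).1 = (f (Sum.inl ⟨i, v⟩)).1 := by
    intro i u v
    by_cases huv : u = v
    · rw [huv]
    obtain ⟨w, hw1, hw2⟩ := exists_third (hp i) u v
    exact host_triangle (hadj i u v huv) (hadj i u w hw1.symm) (hadj i v w hw2.symm)
  refine ⟨fun i => (f (Sum.inl ⟨i, e i⟩)).1, fun j => ?_⟩
  set P := Finset.univ.filter (fun i => (f (Sum.inl ⟨i, e i⟩)).1 = j) with hP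
  let S : Finset (IntervalGuestVert n m p) :=
    (P.sigma (fun i => (Finset.univ : Finset (Fin (p i))))).disjSum Finset.univ
  have hsub : (Finset.univ.image (fun v : Fin q => (j, v))) ⊆ S.image f := by
    intro x hx
    obtain ⟨y, rfl⟩ := hf x
    have hx1 : (f y).1 = j := by
      simp only [Finset.mem_image, Finset.mem_univ, true_and] at hx
      obtain ⟨v, hv⟩ := hx
      rw [← hv]
    refine Finset.mem_image_of_mem _ ?_
    rcases y with ⟨i, u⟩ | y
    · simp only [S, Finset.inl_mem_disjSum, Finset.mem_sigma, Finset.mem_univ, and_true, hP,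
        Finset.mem_filter, true_and]
      rw [← hx1]
      exact hsame i _ _
    · simp [S]
  have h1 := Finset.card_le_card hsub
  rw [Finset.card_image_of_injective _ (fun a b h => (Prod.mk.inj h).2)] at h1
  have h2 := h1.trans Finset.card_image_le
  have h3 : Fintype.card {k : Fin n // k.val + 1 < n} ≤ n - 1 := by
    have : Function.Injective (fun k : {k : Fin n // k.val + 1 < n} =>
        (⟨k.1.val, by have := k.2; omega⟩ : Fin (n - 1))) := by
      intro a b h
      simpa [Fin.ext_iff, Subtype.ext_iff] using h
    simpa using Fintype.card_le_of_injective _ this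
  have h4 : S.card = ∑ i ∈ P, p i + Fintype.card {k : Fin n // k.val + 1 < n} * (2 * m - 2) := by
    simp only [S, Finset.card_disjSum, Finset.card_sigma, Finset.card_univ, Fintype.card_fin,
      Fintype.card_prod]
  rw [h4, Finset.card_univ, Fintype.card_fin] at h2
  exact h2.trans (Nat.add_le_add_left (Nat.mul_le_mul_right _ h3) _)

/-- Let `A = {a₁, …, a_n}` be an `(m,B)`-positive multiset. Set
`pᵢ = 6m²(aᵢ + B)` and `q = 24m²B`. Let `G` be the connected graph obtained from disjoint
cliques `U₁, …, U_n` with `|Uᵢ| = pᵢ`, where for `i = 2, …, n` a designated vertex of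
`Uᵢ₋₁` is joined to a designated vertex of `Uᵢ` by a path of length `2m - 1` whose
internal vertices are new. Let `H` be the connected graph obtained from disjoint cliques
`X⁽¹⁾, …, X⁽ᵐ⁾`, each of size `q`, where for `j = 2, …, m` a designated vertex of
`X⁽ʲ⁻¹⁾` is joined by an edge to a designated vertex of `X⁽ʲ⁾`. Then `A` has a
3-partition if and only if there exists a surjective homomorphism from `G` to `H`. -/
theorem threePartition_iff_surjective_hom_proper_interval_graphs
    (n m B : ℕ) (a : Fin n → ℕ) (hn : n = 3 * m) (hsum : ∑ i, a i = m * B)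
    (hpos : ∀ i, 0 < a i)
    (e s : ∀ i : Fin n, Fin (6 * m ^ 2 * (a i + B)))
    (eH sH : Fin m → Fin (24 * m ^ 2 * B)) :
    HasThreePartition n m B a ↔
      ∃ f : intervalGuest n m (fun i => 6 * m ^ 2 * (a i + B)) e s →g
            intervalHost m (24 * m ^ 2 * B) eH sH,
        Function.Surjective f := by
  rcases Nat.eq_zero_or_pos m with hm | hm
  · subst hm
    subst hn
    constructor
    · intro _
      refine ⟨⟨fun x => ?_, ?_⟩, fun y => y.1.elim0⟩
      · rcases x with x | x
        · exact x.1.elim0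
        · exact x.1.1.elim0
      · intro x
        rcases x with x | x
        · exact x.1.elim0
        · exact x.1.1.elim0
    · intro _
      exact ⟨fun i => i.elim0, fun j => j.elim0⟩
  have hB : 0 < B := by
    have : 0 < 24 * m ^ 2 * B := Nat.zero_lt_of_lt (eH ⟨0, hm⟩).isLt
    exact Nat.pos_of_mul_pos_left this
  have hm2 : 1 ≤ m ^ 2 := Nat.one_le_pow _ _ hm
  have hq : 3 ≤ 24 * m ^ 2 * B := by nlinarith
  have hp : ∀ i, 3 ≤ 6 * m ^ 2 * (a i + B) := fun i => by nlinarith [hpos i]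
  constructor
  · rintro ⟨part, hpart⟩
    obtain ⟨g, hg, hg1⟩ := exists_block_bijection (q := 24 * m ^ 2 * B)
      (fun i => 6 * m ^ 2 * (a i + B)) part (by
        intro j
        rw [← Finset.mul_sum, Finset.sum_add_distrib, (hpart j).2, Finset.sum_const, (hpart j).1]
        simp only [smul_eq_mul]
        ring)
    obtain ⟨f, hf⟩ := exists_hom_of_blocks _ e s eH sH hq part g hg.1 hg1
    refine ⟨f, fun y => ?_⟩
    obtain ⟨x, hx⟩ := hg.2 y
    exact ⟨Sum.inl x, (hf x).trans hx⟩
  · rintro ⟨f, hf⟩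
    obtain ⟨part, hpart⟩ := exists_part_of_hom _ e s eH sH hp f hf
    refine ⟨part, ?_⟩
    have hpath : (n - 1) * (2 * m - 2) < 6 * m ^ 2 := by
      obtain ⟨k, rfl⟩ : ∃ k, m = k + 1 := ⟨m - 1, by omega⟩
      have h1 : n - 1 = 3 * k + 2 := by omega
      have h2 : 2 * (k + 1) - 2 = 2 * k := by omega
      rw [h1, h2]
      nlinarith
    let c : Fin m → ℕ := fun j => (Finset.univ.filter (fun i => part i = j)).card
    let S : Fin m → ℕ := fun j => ∑ i ∈ Finset.univ.filter (fun i => part i = j), a i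
    have hlow : ∀ j, 4 * B ≤ S j + c j * B := by
      intro j
      have h := hpart j
      rw [← Finset.mul_sum, Finset.sum_add_distrib, Finset.sum_const, smul_eq_mul] at h
      change _ ≤ 6 * m ^ 2 * (S j + c j * B) + _ at h
      by_contra! hlt
      have h5 : 6 * m ^ 2 * (S j + c j * B + 1) ≤ 6 * m ^ 2 * (4 * B) :=
        Nat.mul_le_mul_left _ hlt
      nlinarith
    have hc : ∑ j, c j = 3 * m := by
      have := Finset.card_eq_sum_card_fiberwise (f := part) (s := Finset.univ)
        (t := Finset.univ) (by simp)
      simp only [Finset.card_univ, Fintype.card_fin] at this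
      rw [← hn]
      exact this.symm
    have hS : ∑ j, S j = m * B := by
      rw [← hsum]
      exact Finset.sum_fiberwise _ _ _
    have heq : ∀ j, 4 * B = S j + c j * B := by
      have := (Finset.sum_eq_sum_iff_of_le (s := Finset.univ) (fun j _ => hlow j)).1 (by
        rw [Finset.sum_add_distrib, ← Finset.sum_mul Finset.univ c, hc, hS]
        simp
        ring)
      exact fun j => this j (Finset.mem_univ j)
    have hc3 : ∀ j, c j ≤ 3 := by
      intro j
      by_contra! h4
      have hne : (Finset.univ.filter (fun i => part i = j)).Nonempty :=
        Finset.card_pos.1 (by change 0 < c j; omega)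
      have h5 : 0 < S j := Finset.sum_pos (fun i _ => hpos i) hne
      have h6 : 4 * B ≤ c j * B := Nat.mul_le_mul_right _ h4
      have := heq j
      omega
    have hc3' : ∀ j, c j = 3 := by
      have := (Finset.sum_eq_sum_iff_of_le (s := Finset.univ) (fun j _ => hc3 j)).1 (by
        rw [hc]
        simp
        ring)
      exact fun j => this j (Finset.mem_univ j)
    intro j
    refine ⟨hc3' j, ?_⟩
    have := heq j
    rw [hc3' j] at this
    change S j = B
    omega
end

section
/- Let G be a finite graph whose vertex set is partitioned into nonempty sets U_1, …, U_p such that each U_i is an independent set and, for all i ≠ i', either every vertex of U_i is adjacent to every vertex of U_{i'} (write U_i ~ U_{i'}) or no vertex of U_i is adjacent to any vertex of U_{i'}. Let H be a finite graph whose vertex set is analogously partitioned into nonempty independent sets W_1, …, W_q with all-or-nothing adjacency between distinct parts (write W_j ~ W_{j'}). Then there exists a surjective homomorphism from G to H if and only if there exist nonnegative integers x_{ij} (1 ≤ i ≤ p, 1 ≤ j ≤ q) such that: (a) Σ_{j=1}^q x_{ij} = |U_i| for every i; (b) Σ_{i=1}^p x_{ij} ≥ |W_j| for every j; and (c) whenever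 x_{ij} > 0, x_{i'j'} > 0 and U_i ~ U_{i'}, then W_j ~ W_{j'}. -/
/-- Let `G` be a finite graph whose vertex set is partitioned into
nonempty independent sets `U₁, …, U_p` with all-or-nothing adjacency between distinct
parts, and let `H` be a finite graph analogously partitioned into nonempty independent
sets `W₁, …, W_q` with all-or-nothing adjacency between distinct parts. Writing
`Uᵢ ~ Uᵢ'` for "every vertex of `Uᵢ` is adjacent to every vertex of `Uᵢ'`" (and likewise
for the `W`-parts), there exists a surjective homomorphism from `G` to `H` if and only if
there exist nonnegative integers `x i j` such that:
(a) `∑ j, x i j = |Uᵢ|` for every `i`;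
(b) `∑ i, x i j ≥ |W_j|` for every `j`; and
(c) whenever `x i j > 0`, `x i' j' > 0` and `Uᵢ ~ Uᵢ'`, then `W_j ~ W_j'`. -/
theorem surjective_hom_iff_integer_program {V W : Type*} [Fintype V] [Fintype W]
    (G : SimpleGraph V) (H : SimpleGraph W) (p q : ℕ)
    (U : Fin p → Set V) (Wp : Fin q → Set W)
    (hUpart : ∀ v : V, ∃! i : Fin p, v ∈ U i)
    (hUne : ∀ i, (U i).Nonempty)
    (hUind : ∀ i, ∀ u ∈ U i, ∀ v ∈ U i, ¬ G.Adj u v)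
    (hUaon : ∀ i i' : Fin p, i ≠ i' →
      (∀ u ∈ U i, ∀ v ∈ U i', G.Adj u v) ∨ (∀ u ∈ U i, ∀ v ∈ U i', ¬ G.Adj u v))
    (hWpart : ∀ w : W, ∃! j : Fin q, w ∈ Wp j)
    (hWne : ∀ j, (Wp j).Nonempty)
    (hWind : ∀ j, ∀ w ∈ Wp j, ∀ z ∈ Wp j, ¬ H.Adj w z)
    (hWaon : ∀ j j' : Fin q, j ≠ j' →
      (∀ w ∈ Wp j, ∀ z ∈ Wp j', H.Adj w z) ∨ (∀ w ∈ Wp j, ∀ z ∈ Wp j', ¬ H.Adj w z)) :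
    (∃ f : G →g H, Function.Surjective f) ↔
      ∃ x : Fin p → Fin q → ℕ,
        (∀ i, ∑ j, x i j = (U i).ncard) ∧
        (∀ j, (Wp j).ncard ≤ ∑ i, x i j) ∧
        (∀ i i' j j', 0 < x i j → 0 < x i' j' →
          (∀ u ∈ U i, ∀ v ∈ U i', G.Adj u v) →
          (∀ w ∈ Wp j, ∀ z ∈ Wp j', H.Adj w z)) := by
  classical
  choose a ha ha' using hUpart
  choose b hb hb' using hWpart
  have hU : ∀ i, U i = {v | a v = i} := by
    intro i; ext v
    exact ⟨fun h => (ha' v i h).symm, fun h => by have := ha v; rwa [h] at this⟩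
  have hW : ∀ j, Wp j = {w | b w = j} := by
    intro j; ext w
    exact ⟨fun h => (hb' w j h).symm, fun h => by have := hb w; rwa [h] at this⟩
  have hUc : ∀ i, (U i).ncard = Fintype.card {v // a v = i} := by
    intro i
    rw [hU, ← Nat.card_coe_set_eq, Nat.card_eq_fintype_card]
    rfl
  have hWc : ∀ j, (Wp j).ncard = Fintype.card {w // b w = j} := by
    intro j
    rw [hW, ← Nat.card_coe_set_eq, Nat.card_eq_fintype_card]
    rfl
  constructor
  · rintro ⟨f, hf⟩
    refine ⟨fun i j => (Finset.univ.filter (fun v => a v = i ∧ b (f v) = j)).card, ?_, ?_, ?_⟩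
    · intro i
      rw [hUc, Fintype.card_subtype]
      rw [Finset.card_eq_sum_card_fiberwise (f := fun v => b (f v)) (t := Finset.univ)
        (fun _ _ => by simp)]
      simp only [Finset.filter_filter]
    · intro j
      have h1 : ∑ i, (Finset.univ.filter (fun v => a v = i ∧ b (f v) = j)).card
          = (Finset.univ.filter (fun v => b (f v) = j)).card := by
        rw [Finset.card_eq_sum_card_fiberwise (f := a) (t := Finset.univ) (fun _ _ => by simp)]
        simp only [Finset.filter_filter, and_comm]
      rw [h1, hWc, Fintype.card_subtype]
      apply Finset.card_le_card_of_surjOn f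
      intro w hw
      obtain ⟨v, rfl⟩ := hf w
      exact ⟨v, by simpa using hw, rfl⟩
    · intro i i' j j' h h' hadj
      obtain ⟨v, hv⟩ := Finset.card_pos.mp h
      obtain ⟨v', hv'⟩ := Finset.card_pos.mp h'
      simp only [Finset.mem_filter, Finset.mem_univ, true_and] at hv hv'
      obtain ⟨rfl, rfl⟩ := hv
      obtain ⟨rfl, rfl⟩ := hv'
      have hH : H.Adj (f v) (f v') := f.map_adj (hadj v (ha v) v' (ha v'))
      have hne : b (f v) ≠ b (f v') := by
        intro he
        have h2 := hb (f v')
        rw [← he] at h2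
        exact hWind _ _ (hb (f v)) _ h2 hH
      rcases hWaon _ _ hne with h3 | h3
      · exact h3
      · exact absurd hH (h3 _ (hb _) _ (hb _))
  · rintro ⟨x, hx1, hx2, hx3⟩
    have he : ∀ i, Nonempty ({v // a v = i} ≃ (Σ j, Fin (x i j))) := by
      intro i
      apply Fintype.card_eq.mp
      rw [← hUc, ← hx1]
      simp
    let e := fun i => Classical.choice (he i)
    obtain ⟨E, hE⟩ : ∃ E : V ≃ (Σ i, Σ j, Fin (x i j)), ∀ v, (E v).1 = a v :=
      ⟨(Equiv.sigmaFiberEquiv a).symm.trans (Equiv.sigmaCongrRight e), fun v => rfl⟩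
    let g : V → Fin q := fun v => (E v).2.1
    have hpos : ∀ v, 0 < x (a v) (g v) := fun v => by
      rw [← hE]; exact Fin.pos (E v).2.2
    have hemb : ∀ j, Nonempty ({w // b w = j} ↪ (Σ i, Fin (x i j))) := by
      intro j
      apply Function.Embedding.nonempty_of_card_le
      rw [← hWc]
      simpa using hx2 j
    have hsurj : ∀ j, ∃ F : {v // g v = j} → {w // b w = j}, Function.Surjective F := by
      intro j
      obtain ⟨m⟩ := hemb j
      obtain ⟨w, hw⟩ := hWne j
      have : Nonempty {w // b w = j} := ⟨⟨w, hb' w j hw ▸ rfl⟩⟩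
      let φ : {w // b w = j} → {v // g v = j} := fun w =>
        ⟨E.symm ⟨(m w).1, j, (m w).2⟩, congrArg (fun s => s.2.1)
          (E.apply_symm_apply ⟨(m w).1, j, (m w).2⟩)⟩
      have hφ : Function.Injective φ := by
        intro w w' h
        have h1 := E.symm.injective (congrArg Subtype.val h)
        apply m.injective
        generalize m w = s at h1 ⊢
        generalize m w' = t at h1 ⊢
        obtain ⟨i, k⟩ := s
        obtain ⟨i', k'⟩ := t
        simp only [Sigma.mk.injEq] at h1
        obtain ⟨rfl, h2⟩ := h1
        simpa using h2
      exact ⟨Function.invFun φ, Function.invFun_surjective hφ⟩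
    choose F hF using hsurj
    have hbF : ∀ v, b (F (g v) ⟨v, rfl⟩) = g v := fun v => (F (g v) ⟨v, rfl⟩).2
    refine ⟨⟨fun v => (F (g v) ⟨v, rfl⟩ : W), ?_⟩, ?_⟩
    · intro v v' hadj
      have hne : a v ≠ a v' := by
        intro h
        have h2 := ha v'
        rw [← h] at h2
        exact hUind _ _ (ha v) _ h2 hadj
      have hall : ∀ u ∈ U (a v), ∀ u' ∈ U (a v'), G.Adj u u' := by
        rcases hUaon _ _ hne with h3 | h3
        · exact h3
        · exact absurd hadj (h3 _ (ha _) _ (ha _))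
      refine hx3 _ _ _ _ (hpos v) (hpos v') hall _ ?_ _ ?_
      · rw [hW]; exact hbF v
      · rw [hW]; exact hbF v'
    · intro w
      obtain ⟨⟨v, hv⟩, h⟩ := hF (b w) ⟨w, rfl⟩
      refine ⟨v, ?_⟩
      have key : ∀ j (hj : g v = j), (F (g v) ⟨v, rfl⟩ : W) = F j ⟨v, hj⟩ := by
        rintro _ rfl; rfl
      exact (key _ hv).trans (congrArg Subtype.val h)
end
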